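/- Let N ≥ 2 and let p, q be positive integers with p + q ≤ N. The number of functions f ∈ F_N whose global orbit pattern is [p, q] equals (N−1)! · N^{N−(p+q)} / ((N−(p+q))! · q). -/

import Mathlib

/-!
A function `f` has pattern `[p, q]` iff it has exactly two cycles, of lengths `p` and `q`, and the
point `0` lies in the component of the `p`-cycle. Count the triples `(f, x, e)` where
`e : ZMod p ⊕ ZMod q ↪ V` parametrises the two cycles of `f : V → V` and `x` lies in the component
of the `p`-cycle.

For fixed `f` and `x`, the possible `e` differ by rotations of the two cycles, so there are `p * q`
of them or none; and by conjugation the number of admissible `f` is the same for all `x`. With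
`N = |V|`, the number of triples is therefore `N * (p * q)` times the number sought.

For each of the `N! / (N - (p + q))!` embeddings `e`, define `f` one point at a time, starting from
its values on the image of `e`. Choosing one more value, in all the ways that close no new cycle,
multiplies the total number of points flowing into the `p`-cycle by exactly `N`; so there are
`p * N ^ (N - (p + q))` pairs `(f, x)`.
-/

open scoped Classical

/-- Two points are in the same component of `X_N` under `f`:
`x ~ y` iff some forward iterate of `x` equals some forward iterate of `y`. -/
def sameComp {N : ℕ} (f : Fin N → Fin N) (x y : Fin N) : Prop :=
  ∃ k l : ℕ, f^[k] x = f^[l] y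

/-- The order `ω(x, f)` of a point `x`: the length of the periodic cycle contained in
the component of `x`, i.e. the least `p > 0` such that the orbit of `x` is eventually
`p`-periodic. -/
noncomputable def gopOrd {N : ℕ} (f : Fin N → Fin N) (x : Fin N) : ℕ :=
  sInf {p : ℕ | 0 < p ∧ ∃ K : ℕ, f^[K + p] x = f^[K] x}

/-- The global orbit pattern of `f`: the list of orders of the least elements of the
components of `X_N` under `f`, listed in increasing order of those least elements. -/
noncomputable def gop {N : ℕ} (f : Fin N → Fin N) : List ℕ :=
  ((Finset.univ.filter (fun x : Fin N => ∀ y : Fin N, sameComp f x y → x ≤ y)).sort (· ≤ ·)).map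
    (gopOrd f)

open Finset Function

lemma card_filter_mem_eq_ncard {V : Type*} [Fintype V] (S : Set V) [DecidablePred (· ∈ S)] :
    #{x | x ∈ S} = S.ncard := by
  rw [← Set.ncard_coe_finset, coe_filter_univ, Set.ofPred_mem_eq]

section Basin

variable {V W : Type*} {f : V → V} {S T : Set V} {r t x : V}

/-- The basin of `S` under `f`: the points with a forward iterate in `S`. If `S` is the cycle of a
component of `f`, its basin is that component. -/
def basin (f : V → V) (S : Set V) : Set V := {y | ∃ k : ℕ, f^[k] y ∈ S}

lemma subset_basin : S ⊆ basin f S := fun _ hy => ⟨0, hy⟩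

lemma basin_mono (h : S ⊆ T) : basin f S ⊆ basin f T := fun _ ⟨k, hk⟩ => ⟨k, h hk⟩

lemma basin_union : basin f (S ∪ T) = basin f S ∪ basin f T := by
  ext y
  simp [basin, exists_or]

lemma mem_basin_iff_mem_or_apply_mem : x ∈ basin f S ↔ x ∈ S ∨ f x ∈ basin f S := by
  constructor
  · rintro ⟨_ | k, hk⟩
    · exact Or.inl hk
    · exact Or.inr ⟨k, hk⟩
  · rintro (hx | ⟨k, hk⟩)
    · exact subset_basin hx
    · exact ⟨k + 1, hk⟩

lemma iterate_mem_basin_iff (hS : Set.MapsTo f S S) (k : ℕ) :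
    f^[k] x ∈ basin f S ↔ x ∈ basin f S := by
  constructor
  · rintro ⟨m, hm⟩
    exact ⟨m + k, by rwa [iterate_add_apply]⟩
  · rintro ⟨m, hm⟩
    exact ⟨m, by rw [(Commute.iterate_iterate_self f m k).eq]; exact hS.iterate k hm⟩

lemma mapsTo_basin (hS : Set.MapsTo f S S) : Set.MapsTo f (basin f S) (basin f S) :=
  fun _ hy => (iterate_mem_basin_iff hS 1).2 hy

lemma basin_eq_self (hS : Set.MapsTo f Sᶜ Sᶜ) : basin f S = S :=
  Set.Subset.antisymm (fun _ ⟨k, hk⟩ => by_contra fun hy => hS.iterate k hy hk) subset_basin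

lemma mem_basin_iff_of_isFixedPt (hx : IsFixedPt f x) : x ∈ basin f S ↔ x ∈ S :=
  ⟨fun ⟨k, hk⟩ => by rwa [(hx.iterate k).eq] at hk, fun h => subset_basin h⟩

lemma disjoint_basin (hS : Set.MapsTo f S S) (hT : Set.MapsTo f T T) (hST : Disjoint S T) :
    Disjoint (basin f S) (basin f T) := by
  refine Set.disjoint_left.2 fun y ⟨k, hk⟩ hy => ?_
  obtain ⟨l, hl⟩ := (iterate_mem_basin_iff hT k).2 hy
  exact Set.disjoint_left.1 hST (hS.iterate l hk) hl

lemma preimage_basin_image {e : W → V} {π : W → W} (he : Injective e) (hf : Semiconj e π f)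
    (J : Set W) : e ⁻¹' basin f (e '' J) = basin π J := by
  ext s
  simp only [basin, Set.mem_preimage, Set.mem_ofPred_eq, ← (hf.iterate_right _).eq,
    he.mem_set_image]

lemma basin_periodicPts [Finite V] (f : V → V) : basin f (periodicPts f) = Set.univ := by
  refine Set.eq_univ_of_forall fun y => ?_
  obtain ⟨m, n, hmn, h⟩ : ∃ m n, m < n ∧ f^[m] y = f^[n] y := by
    simpa using Set.infinite_univ.exists_lt_map_eq_of_mapsTo (f := fun k : ℕ => f^[k] y)
      (Set.mapsTo_univ _ _) Set.finite_univ
  refine ⟨m, mk_mem_periodicPts (Nat.sub_pos_of_lt hmn) ?_⟩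
  rw [IsPeriodicPt, IsFixedPt, ← iterate_add_apply, Nat.sub_add_cancel hmn.le, h]

lemma mem_basin_update_of_notMem (hx : x ∉ basin f {r}) :
    x ∈ basin (update f r t) S ↔ x ∈ basin f S := by
  have iterate_update : ∀ k, (update f r t)^[k] x = f^[k] x := by
    intro k
    induction k with
    | zero => rfl
    | succ k ih =>
      rw [iterate_succ_apply', iterate_succ_apply', ih, update_of_ne fun h => hx ⟨k, h⟩]
  simp only [basin, Set.mem_ofPred_eq, iterate_update]

lemma mem_basin_update_of_mem (hr : IsFixedPt f r) (hrS : r ∉ S) (ht : t ∉ basin f {r})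
    (hx : x ∈ basin f {r}) : x ∈ basin (update f r t) S ↔ x ∈ basin f S ∨ t ∈ basin f S := by
  obtain ⟨k, hk⟩ := hx
  induction k generalizing x with
  | zero =>
    obtain rfl : x = r := hk
    rw [mem_basin_iff_mem_or_apply_mem, update_self, mem_basin_update_of_notMem ht,
      mem_basin_iff_of_isFixedPt hr]
  | succ k ih =>
    by_cases hxr : x = r
    · subst hxr
      exact ih ((hr.iterate k).eq)
    · rw [mem_basin_iff_mem_or_apply_mem, update_of_ne hxr, ih hk, ← or_assoc,
        ← mem_basin_iff_mem_or_apply_mem]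

lemma basin_update (hr : IsFixedPt f r) (hrS : r ∉ S) (ht : t ∉ basin f {r}) :
    basin (update f r t) S = basin f S ∪ if t ∈ basin f S then basin f {r} else ∅ := by
  ext x
  by_cases hx : x ∈ basin f {r}
  · rw [mem_basin_update_of_mem hr hrS ht hx]
    split_ifs with htS <;> simp [hx, htS]
  · rw [mem_basin_update_of_notMem hx]
    split_ifs <;> simp [hx]

/-- If `a` points flow into `S` and `b` points into `r`, then `a` of the targets `t` yield `a + b`
points flowing into `S`, and the other `|V| - b - a` leave `a` of them: in total `a * |V|`. -/
lemma sum_ncard_basin_update [Fintype V] (hS : Set.MapsTo f S S) (hr : IsFixedPt f r)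
    (hrS : r ∉ S) :
    ∑ t with t ∉ basin f {r}, (basin (update f r t) S).ncard
      = (basin f S).ncard * Fintype.card V := by
  have hdisj : Disjoint (basin f S) (basin f {r}) :=
    disjoint_basin hS (Set.mapsTo_singleton.2 hr) (Set.disjoint_singleton_right.2 hrS)
  have ncard_update : ∀ t ∉ basin f {r}, (basin (update f r t) S).ncard
      = (basin f S).ncard + if t ∈ basin f S then (basin f {r}).ncard else 0 := by
    intro t ht
    rw [basin_update hr hrS ht]
    split_ifs
    · exact Set.ncard_union_eq hdisj
    · rw [Set.union_empty, add_zero]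
  have card_notMem : #{t | t ∉ basin f {r}} = (basin f {r})ᶜ.ncard := by
    simp [← card_filter_mem_eq_ncard]
  have card_mem : #{t ∈ {t | t ∉ basin f {r}} | t ∈ basin f S} = (basin f S).ncard := by
    rw [filter_filter, ← card_filter_mem_eq_ncard]
    congr 1 with t
    have : t ∈ basin f S → t ∉ basin f {r} := fun h => Set.disjoint_left.1 hdisj h
    simp only [mem_filter, mem_univ, true_and, and_iff_right_of_imp this]
  calc ∑ t with t ∉ basin f {r}, (basin (update f r t) S).ncard
      = ∑ t with t ∉ basin f {r}, (basin f S).ncard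
        + ∑ t with t ∉ basin f {r}, if t ∈ basin f S then (basin f {r}).ncard else 0 := by
        rw [← sum_add_distrib]
        exact sum_congr rfl fun t ht => ncard_update t (mem_filter.1 ht).2
    _ = (basin f {r})ᶜ.ncard * (basin f S).ncard + (basin f S).ncard * (basin f {r}).ncard := by
        rw [sum_const, ← sum_filter, sum_const, card_mem, card_notMem, smul_eq_mul, smul_eq_mul]
    _ = (basin f S).ncard * Fintype.card V := by
        rw [← Nat.card_eq_fintype_card, ← Set.ncard_add_ncard_compl (basin f {r})]
        ring

end Basin

section PartialForest

variable {V : Type*} {g f : V → V} {A C : Set V} {U : Finset V} {r t : V}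

/-- The partial function obtained from `g` by forgetting its values on `U` preserves `C`, is
defined on all of `C`, and has no cycle outside `C`. The undefined values are encoded by fixed
points of `g`, so that the basin of `u ∈ U` under `g` is the tree of points whose orbit stops
at `u`. -/
structure IsPartialForest (g : V → V) (C : Set V) (U : Finset V) : Prop where
  mapsTo : Set.MapsTo g C C
  isFixedPt : ∀ u ∈ U, IsFixedPt g u
  notMem : ∀ u ∈ U, u ∉ C
  basin_union_eq : basin g (C ∪ U) = Set.univ

lemma IsPartialForest.update_of_insert (h : IsPartialForest g C (insert r U)) (hrU : r ∉ U)
    (ht : t ∉ basin g {r}) : IsPartialForest (update g r t) C U := by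
  have hrC : r ∉ C := h.notMem r (mem_insert_self r U)
  have hr : IsFixedPt g r := h.isFixedPt r (mem_insert_self r U)
  refine ⟨fun y hy => ?_, fun u hu => ?_, fun u hu => h.notMem u (mem_insert_of_mem hu), ?_⟩
  · rw [update_of_ne (ne_of_mem_of_not_mem hy hrC)]
    exact h.mapsTo hy
  · rw [IsFixedPt, update_of_ne (ne_of_mem_of_not_mem hu hrU)]
    exact h.isFixedPt u (mem_insert_of_mem hu)
  · have hcover : basin g {r} ∪ basin g (C ∪ U) = Set.univ := by
      rw [← basin_union, ← h.basin_union_eq, coe_insert, Set.insert_eq, Set.union_left_comm]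
    have htCU : t ∈ basin g (C ∪ U) := (hcover ▸ Set.mem_univ t).resolve_left ht
    have hrCU : r ∉ C ∪ (U : Set V) := by simp [hrC, hrU]
    rw [basin_update hr hrCU ht, if_pos htCU, Set.union_comm, hcover]

variable [Fintype V]

/-- The functions that agree with `g` outside `U` and all of whose cycles lie in `C`. -/
noncomputable def completions (g : V → V) (C : Set V) (U : Finset V) : Finset (V → V) :=
  {f | Set.EqOn f g (U : Set V)ᶜ ∧ basin f C = Set.univ}

lemma mem_completions :
    f ∈ completions g C U ↔ Set.EqOn f g (U : Set V)ᶜ ∧ basin f C = Set.univ := by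
  simp [completions]

lemma IsPartialForest.completions_empty (h : IsPartialForest g C ∅) :
    completions g C ∅ = {g} := by
  ext f
  simp only [mem_completions, coe_empty, Set.compl_empty, Set.eqOn_univ, mem_singleton,
    and_iff_left_iff_imp]
  rintro rfl
  simpa using h.basin_union_eq

lemma filter_completions_insert (hrU : r ∉ U) :
    {f ∈ completions g C (insert r U) | f r = t} = completions (update g r t) C U := by
  have hcompl : (U : Set V)ᶜ = insert r ((insert r U : Finset V) : Set V)ᶜ := by
    ext y
    by_cases hy : y = r <;> simp [hy, hrU]
  have eqOn_update : Set.EqOn (update g r t) g ((insert r U : Finset V) : Set V)ᶜ :=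
    fun y hy => update_of_ne (fun h => hy (by simp [h])) _ _
  ext f
  have eqOn_iff : Set.EqOn f g ((insert r U : Finset V) : Set V)ᶜ
      ↔ Set.EqOn f (update g r t) ((insert r U : Finset V) : Set V)ᶜ :=
    ⟨fun h => h.trans eqOn_update.symm, fun h => h.trans eqOn_update⟩
  rw [mem_filter, mem_completions, mem_completions, hcompl, Set.insert_eq, Set.eqOn_union,
    Set.eqOn_singleton, update_self, eqOn_iff]
  tauto

/-- A target `t` in the basin of `r` closes a cycle through `r`. -/
lemma IsPartialForest.completions_update_eq_empty (h : IsPartialForest g C (insert r U))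
    (hrU : r ∉ U) (ht : t ∈ basin g {r}) : completions (update g r t) C U = ∅ := by
  have hr : IsFixedPt g r := h.isFixedPt r (mem_insert_self r U)
  have hrC : r ∉ C := h.notMem r (mem_insert_self r U)
  have hdisj : Disjoint (basin g C) (basin g {r}) := disjoint_basin h.mapsTo
    (Set.mapsTo_singleton.2 hr) (Set.disjoint_singleton_right.2 hrC)
  refine eq_empty_of_forall_notMem fun f hf => ?_
  obtain ⟨hfg, hfC⟩ := mem_completions.1 hf
  have mapsTo_basin_r : Set.MapsTo f (basin g {r}) (basin g {r}) := by
    intro y hy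
    by_cases hyr : y = r
    · rwa [hyr, hfg hrU, update_self]
    · have hyU : y ∉ U := fun hyU =>
        hyr ((mem_basin_iff_of_isFixedPt (h.isFixedPt y (mem_insert_of_mem hyU))).1 hy)
      rw [hfg hyU, update_of_ne hyr]
      exact mapsTo_basin (Set.mapsTo_singleton.2 hr) hy
  obtain ⟨k, hk⟩ : r ∈ basin f C := hfC ▸ Set.mem_univ r
  exact Set.disjoint_left.1 hdisj (subset_basin hk)
    (mapsTo_basin_r.iterate k (subset_basin rfl))

lemma IsPartialForest.sum_ncard_basin_completions (h : IsPartialForest g C U)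
    (hA : Set.MapsTo g A A) (hAC : A ⊆ C) :
    ∑ f ∈ completions g C U, (basin f A).ncard = (basin g A).ncard * Fintype.card V ^ #U := by
  induction U using Finset.induction_on generalizing g with
  | empty => simp [h.completions_empty]
  | insert r U hrU ih =>
    have hrA : r ∉ A := fun hr => h.notMem r (mem_insert_self r U) (hAC hr)
    have hr : IsFixedPt g r := h.isFixedPt r (mem_insert_self r U)
    have hA_update (t : V) : Set.MapsTo (update g r t) A A :=
      hA.congr fun y hy => (update_of_ne (ne_of_mem_of_not_mem hy hrA) _ _).symm
    calc ∑ f ∈ completions g C (insert r U), (basin f A).ncard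
        = ∑ t, ∑ f ∈ completions (update g r t) C U, (basin f A).ncard := by
          simp only [← filter_completions_insert hrU]
          exact (sum_fiberwise _ (fun f : V → V => f r) _).symm
      _ = ∑ t with t ∉ basin g {r},
            ∑ f ∈ completions (update g r t) C U, (basin f A).ncard := by
          refine (sum_filter_of_ne fun t _ => mt fun ht => ?_).symm
          rw [h.completions_update_eq_empty hrU ht, sum_empty]
      _ = ∑ t with t ∉ basin g {r},
            (basin (update g r t) A).ncard * Fintype.card V ^ #U :=
          sum_congr rfl fun t ht => ih (h.update_of_insert hrU (mem_filter.1 ht).2) (hA_update t)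
      _ = (basin g A).ncard * Fintype.card V ^ #(insert r U) := by
          rw [← sum_mul, sum_ncard_basin_update hA hr hrA, card_insert_of_notMem hrU]
          ring

end PartialForest

section Semiconj

variable {V ι : Type*} {π : ι → ι}

lemma semiconj_extend (e : ι ↪ V) (π : ι → ι) : Semiconj e π (extend e (e ∘ π) id) :=
  fun s => (e.injective.extend_apply (e ∘ π) id s).symm

lemma basin_extend_image (e : ι ↪ V) (π : ι → ι) (J : Set ι) :
    basin (extend e (e ∘ π) id) (e '' J) = e '' basin π J := by
  have hcompl : Set.MapsTo (extend e (e ∘ π) id) (Set.range e)ᶜ (Set.range e)ᶜ := fun y hy => by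
    rwa [extend_apply' _ _ _ hy]
  have hrange : basin (extend e (e ∘ π) id) (e '' J) ⊆ Set.range e :=
    (basin_mono (Set.image_subset_range e J)).trans (basin_eq_self hcompl).subset
  rw [← preimage_basin_image e.injective (semiconj_extend e π),
    Set.image_preimage_eq_of_subset hrange]

variable [Fintype V] [Fintype ι]

lemma isPartialForest_extend (e : ι ↪ V) (π : ι → ι) :
    IsPartialForest (extend e (e ∘ π) id) (Set.range e) (univ.map e)ᶜ where
  mapsTo := (semiconj_extend e π).mapsTo_range
  isFixedPt u hu := extend_apply' _ _ _ (by simpa using hu)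
  notMem u hu := by simpa using hu
  basin_union_eq := by
    refine Set.eq_univ_of_univ_subset (subset_basin.trans' ?_)
    simp

lemma completions_extend (e : ι ↪ V) (π : ι → ι) :
    completions (extend e (e ∘ π) id) (Set.range e) (univ.map e)ᶜ
      = ({f | Semiconj e π f ∧ basin f (Set.range e) = Set.univ} : Finset (V → V)) := by
  ext f
  rw [mem_completions, mem_filter_univ, coe_compl, compl_compl, coe_map, coe_univ, Set.image_univ,
    Set.eqOn_range, extend_comp e.injective, semiconj_iff_comp_eq, eq_comm]

lemma sum_ncard_basin_image (e : ι ↪ V) {J : Set ι} (hJ : Set.MapsTo π J J) :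
    ∑ f : V → V with Semiconj e π f ∧ basin f (Set.range e) = Set.univ,
        (basin f (e '' J)).ncard
      = (basin π J).ncard * Fintype.card V ^ (Fintype.card V - Fintype.card ι) := by
  rw [← completions_extend, (isPartialForest_extend e π).sum_ncard_basin_completions
    ((semiconj_extend e π).mapsTo_image hJ) (Set.image_subset_range e J), basin_extend_image,
    Set.ncard_image_of_injective _ e.injective, card_compl, card_map, card_univ]

end Semiconj

section Cycle

variable {V : Type*} {p : ℕ} {f : V → V} {α β : ZMod p → V} {x : V}

lemma iterate_apply_of_semiconj_add_one {R : Type*} [AddMonoidWithOne R] {α : R → V}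
    (hα : Semiconj α (· + 1) f) (k : ℕ) (i : R) : f^[k] (α i) = α (i + k) := by
  rw [← (hα.iterate_right k).eq, add_right_iterate, nsmul_one]

lemma exists_eq_comp_add_of_mem_basin [NeZero p] (hα : Semiconj α (· + 1) f)
    (hβ : Semiconj β (· + 1) f) (hxα : x ∈ basin f (Set.range α))
    (hxβ : x ∈ basin f (Set.range β)) : ∃ c, β = α ∘ (· + c) := by
  obtain ⟨k, i, hk⟩ := hxα
  obtain ⟨l, j, hl⟩ := hxβ
  have hmeet : α (i + l) = β (j + k) := by
    rw [← iterate_apply_of_semiconj_add_one hα, ← iterate_apply_of_semiconj_add_one hβ, hk, hl,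
      (Commute.iterate_iterate_self f l k).eq]
  refine ⟨i + l - (j + k), funext fun m => ?_⟩
  have hshift := congrArg f^[(m - (j + k)).val] hmeet
  rw [iterate_apply_of_semiconj_add_one hα, iterate_apply_of_semiconj_add_one hβ,
    ZMod.natCast_zmod_val, add_sub_cancel] at hshift
  rw [← hshift, comp_apply]
  congr 1
  ring

lemma minimalPeriod_apply_of_semiconj_add_one (hα : Semiconj α (· + 1) f) (hinj : Injective α)
    (i : ZMod p) : minimalPeriod f (α i) = p :=
  Nat.dvd_right_iff_eq.1 fun m => by
    rw [← isPeriodicPt_iff_minimalPeriod_dvd, IsPeriodicPt, IsFixedPt,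
      iterate_apply_of_semiconj_add_one hα, hinj.eq_iff, add_eq_left, ZMod.natCast_eq_zero_iff]

lemma exists_injective_semiconj_add_one (hx : x ∈ periodicPts f) :
    ∃ α : ZMod (minimalPeriod f x) → V, Injective α ∧ Semiconj α (· + 1) f ∧ α 0 = x := by
  have : NeZero (minimalPeriod f x) := ⟨(minimalPeriod_pos_of_mem_periodicPts hx).ne'⟩
  refine ⟨fun i => f^[i.val] x, fun i j hij => ?_, fun i => ?_, by simp⟩
  · exact ZMod.val_injective _
      (iterate_injOn_Iio_minimalPeriod (ZMod.val_lt i) (ZMod.val_lt j) hij)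
  · have val_add_one : (i + 1).val = (i.val + 1) % minimalPeriod f x := by
      rw [ZMod.val_add, ZMod.val_one_eq_one_mod, Nat.add_mod_mod]
    simp only [val_add_one, iterate_mod_minimalPeriod_eq, iterate_succ_apply']

end Cycle

section Marking

variable {V W : Type*} {p q : ℕ} {f : V → V} {x : V} {e e' : ZMod p ⊕ ZMod q ↪ V}

/-- The embedding `e` parametrises a `p`-cycle and a `q`-cycle of `f`; these are the only cycles of
`f`, and `x` lies in the component of the `p`-cycle. -/
structure IsMarking (f : V → V) (x : V) (e : ZMod p ⊕ ZMod q ↪ V) : Prop where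
  semiconj : Semiconj e (Sum.map (· + 1) (· + 1)) f
  basin_range : basin f (Set.range e) = Set.univ
  mem_basin : x ∈ basin f (Set.range (e ∘ Sum.inl))

lemma IsMarking.semiconj_inl (h : IsMarking f x e) : Semiconj (e ∘ Sum.inl) (· + 1) f :=
  fun i => h.semiconj (Sum.inl i)

lemma IsMarking.semiconj_inr (h : IsMarking f x e) : Semiconj (e ∘ Sum.inr) (· + 1) f :=
  fun i => h.semiconj (Sum.inr i)

lemma IsMarking.basin_union_basin (h : IsMarking f x e) :
    basin f (Set.range (e ∘ Sum.inl)) ∪ basin f (Set.range (e ∘ Sum.inr)) = Set.univ := by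
  rw [← basin_union, Set.range_comp, Set.range_comp, ← Set.image_union,
    Set.range_inl_union_range_inr, Set.image_univ, h.basin_range]

lemma IsMarking.disjoint_basin (h : IsMarking f x e) :
    Disjoint (basin f (Set.range (e ∘ Sum.inl))) (basin f (Set.range (e ∘ Sum.inr))) := by
  refine _root_.disjoint_basin h.semiconj_inl.mapsTo_range h.semiconj_inr.mapsTo_range ?_
  rw [Set.range_comp, Set.range_comp, Set.disjoint_image_iff e.injective]
  exact Set.isCompl_range_inl_range_inr.disjoint

/-- Independent rotations of the two cycles parametrised by `e`. -/
def rotateMarking (e : ZMod p ⊕ ZMod q ↪ V) (c : ZMod p × ZMod q) : ZMod p ⊕ ZMod q ↪ V :=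
  (Equiv.sumCongr (Equiv.addRight c.1) (Equiv.addRight c.2)).toEmbedding.trans e

lemma coe_rotateMarking (c : ZMod p × ZMod q) :
    ⇑(rotateMarking e c) = e ∘ Sum.map (· + c.1) (· + c.2) := rfl

lemma rotateMarking_injective (e : ZMod p ⊕ ZMod q ↪ V) : Injective (rotateMarking e) := by
  intro c d hcd
  have hl := DFunLike.congr_fun hcd (Sum.inl 0)
  have hr := DFunLike.congr_fun hcd (Sum.inr 0)
  simp only [coe_rotateMarking, comp_apply, Sum.map_inl, Sum.map_inr, zero_add,
    EmbeddingLike.apply_eq_iff_eq, Sum.inl.injEq, Sum.inr.injEq] at hl hr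
  exact Prod.ext hl hr

lemma IsMarking.rotate (h : IsMarking f x e) (c : ZMod p × ZMod q) :
    IsMarking f x (rotateMarking e c) where
  semiconj := by
    rintro (i | i) <;> simp [coe_rotateMarking, add_right_comm, ← h.semiconj.eq]
  basin_range := by
    rw [coe_rotateMarking, Surjective.range_comp, h.basin_range]
    exact (add_right_surjective c.1).sumMap (add_right_surjective c.2)
  mem_basin := by
    have : rotateMarking e c ∘ Sum.inl = (e ∘ Sum.inl) ∘ (· + c.1) := rfl
    rw [this, (add_right_surjective c.1).range_comp]
    exact h.mem_basin

lemma IsMarking.exists_rotateMarking_eq [NeZero p] [NeZero q] (h : IsMarking f x e)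
    (h' : IsMarking f x e') : ∃ c, rotateMarking e c = e' := by
  obtain ⟨c, hc⟩ := exists_eq_comp_add_of_mem_basin h.semiconj_inl h'.semiconj_inl
    h.mem_basin h'.mem_basin
  have range_inl_eq : Set.range (e' ∘ Sum.inl) = Set.range (e ∘ Sum.inl) := by
    rw [hc, (add_right_surjective c).range_comp]
  have mem_inr' : e' (Sum.inr 0) ∈ basin f (Set.range (e' ∘ Sum.inr)) := subset_basin ⟨0, rfl⟩
  have mem_inr : e' (Sum.inr 0) ∈ basin f (Set.range (e ∘ Sum.inr)) := by
    refine (h.basin_union_basin ▸ Set.mem_univ _).resolve_left fun hl => ?_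
    exact Set.disjoint_left.1 h'.disjoint_basin (range_inl_eq ▸ hl) mem_inr'
  obtain ⟨d, hd⟩ := exists_eq_comp_add_of_mem_basin h.semiconj_inr h'.semiconj_inr mem_inr mem_inr'
  refine ⟨(c, d), DFunLike.ext _ _ ?_⟩
  rintro (i | i)
  · exact (congrFun hc i).symm
  · exact (congrFun hd i).symm

/-- The markings of `f` form a single free orbit under rotation of the two cycles. -/
lemma IsMarking.card_eq [NeZero p] [NeZero q] [Fintype V] (h : IsMarking f x e) :
    #{e' : ZMod p ⊕ ZMod q ↪ V | IsMarking f x e'} = p * q := by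
  have : ({e' | IsMarking f x e'} : Finset (ZMod p ⊕ ZMod q ↪ V))
      = univ.image (rotateMarking e) := by
    ext e'
    rw [mem_filter_univ, mem_image_univ_iff_mem_range]
    exact ⟨h.exists_rotateMarking_eq, by rintro ⟨c, rfl⟩; exact h.rotate c⟩
  rw [this, card_image_of_injective _ (rotateMarking_injective e), card_univ, Fintype.card_prod,
    ZMod.card, ZMod.card]

lemma IsMarking.conj (h : IsMarking f x e) (σ : V ≃ W) :
    IsMarking (σ.conj f) (σ x) (e.trans σ.toEmbedding) := by
  have hσ : Semiconj σ f (σ.conj f) := σ.semiconj_conj f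
  have mem_basin_image (S : Set V) (y : V) :
      σ y ∈ basin (σ.conj f) (σ '' S) ↔ y ∈ basin f S := by
    rw [← preimage_basin_image σ.injective hσ, Set.mem_preimage]
  refine ⟨h.semiconj.trans hσ, Set.eq_univ_of_forall (σ.surjective.forall.2 fun y => ?_), ?_⟩
  · rw [Embedding.coe_trans, Set.range_comp]
    exact (mem_basin_image _ y).2 (h.basin_range ▸ Set.mem_univ y)
  · rw [Embedding.coe_trans, comp_assoc, Set.range_comp]
    exact (mem_basin_image _ x).2 h.mem_basin

lemma card_exists_isMarking_congr (p q : ℕ) (σ : V ≃ W) (x : V) :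
    Nat.card {f : V → V // ∃ e : ZMod p ⊕ ZMod q ↪ V, IsMarking f x e}
      = Nat.card {f : W → W // ∃ e : ZMod p ⊕ ZMod q ↪ W, IsMarking f (σ x) e} := by
  refine Nat.card_congr (σ.conj.subtypeEquiv fun f => ⟨fun ⟨e, he⟩ => ⟨_, he.conj σ⟩, ?_⟩)
  rintro ⟨e, he⟩
  have hback := he.conj σ.symm
  rw [← Equiv.conj_symm, Equiv.symm_apply_apply, Equiv.symm_apply_apply] at hback
  exact ⟨_, hback⟩

variable [Fintype V]

lemma sum_card_isMarking_left [NeZero p] [NeZero q] (x : V) :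
    ∑ f : V → V, #{e : ZMod p ⊕ ZMod q ↪ V | IsMarking f x e}
      = Nat.card {f : V → V // ∃ e : ZMod p ⊕ ZMod q ↪ V, IsMarking f x e} * (p * q) := by
  rw [Nat.card_eq_fintype_card, Fintype.card_subtype, ← smul_eq_mul, ← sum_const, sum_filter]
  refine sum_congr rfl fun f _ => ?_
  split_ifs with h
  · obtain ⟨e, he⟩ := h
    exact he.card_eq
  · rw [card_eq_zero, filter_eq_empty_iff]
    exact fun e _ he => h ⟨e, he⟩

lemma sum_card_isMarking_right [NeZero p] [NeZero q] (e : ZMod p ⊕ ZMod q ↪ V) :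
    ∑ f : V → V, #{x | IsMarking f x e} = p * Fintype.card V ^ (Fintype.card V - (p + q)) := by
  have hcompl : Set.MapsTo (Sum.map (· + 1) (· + 1) : ZMod p ⊕ ZMod q → ZMod p ⊕ ZMod q)
      (Set.range Sum.inl)ᶜ (Set.range Sum.inl)ᶜ := by
    rintro (i | i) hi <;> simp_all
  have hmaps : Set.MapsTo (Sum.map (· + 1) (· + 1) : ZMod p ⊕ ZMod q → ZMod p ⊕ ZMod q)
      (Set.range Sum.inl) (Set.range Sum.inl) := by
    rintro _ ⟨i, rfl⟩
    exact ⟨i + 1, rfl⟩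
  have hcount := sum_ncard_basin_image e hmaps
  rw [basin_eq_self hcompl, sum_filter] at hcount
  convert hcount using 1
  · refine sum_congr rfl fun f _ => ?_
    split_ifs with h
    · rw [← Set.range_comp, ← card_filter_mem_eq_ncard]
      congr 1 with x
      simp only [mem_filter, mem_univ, true_and]
      exact ⟨fun hx => hx.mem_basin, fun hx => ⟨h.1, h.2, hx⟩⟩
    · rw [card_eq_zero, filter_eq_empty_iff]
      exact fun x _ hx => h ⟨hx.semiconj, hx.basin_range⟩
  · simp [Set.ncard_range_of_injective Sum.inl_injective, Fintype.card_sum, ZMod.card]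

lemma card_mul_card_exists_isMarking [NeZero p] [NeZero q] (x : V) :
    Fintype.card V * (Nat.card {f : V → V // ∃ e : ZMod p ⊕ ZMod q ↪ V, IsMarking f x e} * (p * q))
      = (Fintype.card V).descFactorial (p + q)
        * (p * Fintype.card V ^ (Fintype.card V - (p + q))) := by
  calc Fintype.card V
        * (Nat.card {f : V → V // ∃ e : ZMod p ⊕ ZMod q ↪ V, IsMarking f x e} * (p * q))
      = ∑ y, Nat.card {f : V → V // ∃ e : ZMod p ⊕ ZMod q ↪ V, IsMarking f y e} * (p * q) := by
        rw [← smul_eq_mul, ← card_univ, ← sum_const]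
        refine sum_congr rfl fun y _ => ?_
        rw [card_exists_isMarking_congr p q (Equiv.swap x y), Equiv.swap_apply_left]
    _ = ∑ y, ∑ f : V → V, #{e : ZMod p ⊕ ZMod q ↪ V | IsMarking f y e} := by
        simp only [sum_card_isMarking_left]
    _ = ∑ e : ZMod p ⊕ ZMod q ↪ V, ∑ f : V → V, #{y | IsMarking f y e} := by
        simp only [card_filter]
        rw [sum_comm, sum_congr rfl fun f _ => sum_comm, sum_comm]
    _ = (Fintype.card V).descFactorial (p + q)
          * (p * Fintype.card V ^ (Fintype.card V - (p + q))) := by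
        simp only [sum_card_isMarking_right, sum_const, card_univ, Fintype.card_embedding_eq,
          Fintype.card_sum, ZMod.card, smul_eq_mul]

end Marking

section GlobalOrbitPattern

lemma sort_map_eq_pair_iff {ι γ : Type*} [LinearOrder ι] {s : Finset ι} {g : ι → γ} {c d : γ} :
    (s.sort (· ≤ ·)).map g = [c, d] ↔ ∃ a b, a < b ∧ s = {a, b} ∧ g a = c ∧ g b = d := by
  constructor
  · intro h
    obtain ⟨a, l, hl, ha, hmap⟩ := List.map_eq_cons_iff.1 h
    obtain ⟨b, rfl, hb⟩ := List.map_eq_singleton_iff.1 hmap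
    have hlt : a < b := by simpa [hl] using (sortedLT_sort s).pairwise
    refine ⟨a, b, hlt, ?_, ha, hb⟩
    rw [← sort_toFinset s (· ≤ ·), hl]
    simp
  · rintro ⟨a, b, hab, rfl, rfl, rfl⟩
    rw [sort_insert _ (by simpa using hab.le) (by simpa using hab.ne), sort_singleton]
    rfl

variable {N p q : ℕ} {f : Fin N → Fin N} {x y z : Fin N} {α : ZMod p → Fin N}

lemma sameComp_refl (f : Fin N → Fin N) (x : Fin N) : sameComp f x x :=
  ⟨0, 0, rfl⟩

lemma sameComp.symm : sameComp f x y → sameComp f y x :=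
  fun ⟨k, l, h⟩ => ⟨l, k, h.symm⟩

lemma sameComp.trans : sameComp f x y → sameComp f y z → sameComp f x z := by
  rintro ⟨k, l, hkl⟩ ⟨m, n, hmn⟩
  refine ⟨m + k, l + n, ?_⟩
  rw [iterate_add_apply, hkl, iterate_add_apply, ← hmn, (Commute.iterate_iterate_self f m l).eq]

lemma gopOrd_eq_minimalPeriod {k : ℕ} (h : f^[k] x ∈ periodicPts f) :
    gopOrd f x = minimalPeriod f (f^[k] x) := by
  refine IsLeast.csInf_eq ⟨⟨minimalPeriod_pos_of_mem_periodicPts h, k, ?_⟩, ?_⟩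
  · rw [add_comm, iterate_add_apply, iterate_minimalPeriod]
  · rintro r ⟨hr, l, hl⟩
    rw [← minimalPeriod_apply_iterate h l]
    refine IsPeriodicPt.minimalPeriod_le hr ?_
    rw [IsPeriodicPt, IsFixedPt, (Commute.iterate_iterate_self f l k).eq,
      (Commute.iterate_iterate_self f r k).eq, ← iterate_add_apply f r, add_comm, hl]

lemma gopOrd_eq_of_mem_basin [NeZero p] (hα : Semiconj α (· + 1) f) (hinj : Injective α)
    (hx : x ∈ basin f (Set.range α)) : gopOrd f x = p := by
  obtain ⟨k, i, hi⟩ := hx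
  have hperiod : minimalPeriod f (f^[k] x) = p :=
    hi ▸ minimalPeriod_apply_of_semiconj_add_one hα hinj i
  rw [gopOrd_eq_minimalPeriod (minimalPeriod_pos_iff_mem_periodicPts.1 (hperiod ▸ NeZero.pos p)),
    hperiod]

lemma exists_injective_semiconj_mem_basin (f : Fin N → Fin N) (x : Fin N) :
    ∃ α : ZMod (gopOrd f x) → Fin N,
      Injective α ∧ Semiconj α (· + 1) f ∧ x ∈ basin f (Set.range α) := by
  obtain ⟨k, hk⟩ : x ∈ basin f (periodicPts f) := basin_periodicPts f ▸ Set.mem_univ x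
  obtain ⟨α, hinj, hα, h0⟩ := exists_injective_semiconj_add_one hk
  rw [gopOrd_eq_minimalPeriod hk]
  exact ⟨α, hinj, hα, k, 0, h0⟩

lemma mem_basin_range_iff_sameComp [NeZero p] (hα : Semiconj α (· + 1) f)
    (hx : x ∈ basin f (Set.range α)) : y ∈ basin f (Set.range α) ↔ sameComp f x y := by
  constructor
  · rintro ⟨l, j, hl⟩
    obtain ⟨k, i, hk⟩ := hx
    refine ⟨(j - i).val + k, l, ?_⟩
    rw [iterate_add_apply, ← hk, iterate_apply_of_semiconj_add_one hα, ← hl,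
      ZMod.natCast_zmod_val, add_sub_cancel]
  · rintro ⟨k, l, hkl⟩
    rwa [← iterate_mem_basin_iff hα.mapsTo_range l, ← hkl,
      iterate_mem_basin_iff hα.mapsTo_range k]

lemma gopOrd_congr (h : sameComp f x y) : gopOrd f x = gopOrd f y := by
  obtain ⟨k, l, hkl⟩ := h
  obtain ⟨m, hm⟩ : f^[k] x ∈ basin f (periodicPts f) := basin_periodicPts f ▸ Set.mem_univ _
  have hm' := hkl ▸ hm
  rw [← iterate_add_apply] at hm hm'
  rw [gopOrd_eq_minimalPeriod hm, gopOrd_eq_minimalPeriod hm', iterate_add_apply, hkl,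
    iterate_add_apply]

/-- The least elements of the components of `Fin N` under `f`. -/
noncomputable def componentMinima (f : Fin N → Fin N) : Finset (Fin N) :=
  {x | ∀ y, sameComp f x y → x ≤ y}

lemma mem_componentMinima : x ∈ componentMinima f ↔ ∀ y, sameComp f x y → x ≤ y :=
  mem_filter_univ x

lemma exists_sameComp_mem_componentMinima (f : Fin N → Fin N) (x : Fin N) :
    ∃ m ∈ componentMinima f, sameComp f x m := by
  obtain ⟨m, hm, hmin⟩ := exists_min_image ({y | sameComp f x y} : Finset (Fin N)) id
    ⟨x, by simpa using sameComp_refl f x⟩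
  simp only [mem_filter_univ, id] at hm hmin
  exact ⟨m, mem_componentMinima.2 fun y hy => hmin y (hm.trans hy), hm⟩

lemma zero_mem_componentMinima [NeZero N] (f : Fin N → Fin N) : 0 ∈ componentMinima f :=
  mem_componentMinima.2 fun y _ => Fin.zero_le y

lemma eq_of_mem_componentMinima (hx : x ∈ componentMinima f) (hy : y ∈ componentMinima f)
    (h : sameComp f x y) : x = y :=
  le_antisymm (mem_componentMinima.1 hx y h) (mem_componentMinima.1 hy x h.symm)

lemma gop_eq_pair_iff [NeZero N] :
    gop f = [p, q] ↔ gopOrd f 0 = p ∧ ∃ b, gopOrd f b = q ∧ ¬ sameComp f 0 b ∧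
      ∀ y, sameComp f 0 y ∨ sameComp f b y := by
  have hgop : gop f = ((componentMinima f).sort (· ≤ ·)).map (gopOrd f) := rfl
  rw [hgop, sort_map_eq_pair_iff]
  constructor
  · rintro ⟨a, b, hab, hset, ha, hb⟩
    have mem_iff (y) : y ∈ componentMinima f ↔ y = a ∨ y = b := by simp [hset]
    obtain rfl : 0 = a :=
      ((mem_iff 0).1 (zero_mem_componentMinima f)).resolve_right ((Fin.zero_le a).trans_lt hab).ne
    refine ⟨ha, b, hb, fun h => hab.ne ?_, fun y => ?_⟩
    · exact eq_of_mem_componentMinima (zero_mem_componentMinima f) ((mem_iff b).2 (.inr rfl)) h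
    · obtain ⟨m, hm, hym⟩ := exists_sameComp_mem_componentMinima f y
      rcases (mem_iff m).1 hm with rfl | rfl
      · exact .inl hym.symm
      · exact .inr hym.symm
  · rintro ⟨h0, b, hb, h0b, hcover⟩
    obtain ⟨m, hm, hbm⟩ := exists_sameComp_mem_componentMinima f b
    have hm0 : m ≠ 0 := fun h => h0b (h ▸ hbm).symm
    refine ⟨0, m, Fin.pos_iff_ne_zero.2 hm0, ?_, h0, gopOrd_congr hbm ▸ hb⟩
    refine Subset.antisymm (fun y hy => ?_) ?_
    · rw [mem_insert, mem_singleton]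
      refine (hcover y).imp (fun h => ?_) fun h => ?_
      · exact (eq_of_mem_componentMinima (zero_mem_componentMinima f) hy h).symm
      · exact eq_of_mem_componentMinima hy hm (h.symm.trans hbm)
    · exact insert_subset (zero_mem_componentMinima f) (singleton_subset_iff.2 hm)

lemma gop_eq_pair_iff_exists_isMarking [NeZero N] [NeZero p] [NeZero q] :
    gop f = [p, q] ↔ ∃ e : ZMod p ⊕ ZMod q ↪ Fin N, IsMarking f 0 e := by
  rw [gop_eq_pair_iff]
  constructor
  · rintro ⟨rfl, b, rfl, h0b, hcover⟩
    obtain ⟨α, hαinj, hα, h0⟩ := exists_injective_semiconj_mem_basin f 0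
    obtain ⟨β, hβinj, hβ, hb⟩ := exists_injective_semiconj_mem_basin f b
    have hne (i j) : α i ≠ β j := fun h => h0b <|
      ((mem_basin_range_iff_sameComp hα h0).1 (subset_basin ⟨i, rfl⟩)).trans
        ((mem_basin_range_iff_sameComp hβ hb).1 (subset_basin ⟨j, h.symm⟩)).symm
    refine ⟨⟨Sum.elim α β, hαinj.sumElim hβinj hne⟩, ?_, ?_, h0⟩
    · rintro (i | i)
      · exact hα i
      · exact hβ i
    · refine Set.eq_univ_of_forall fun y => ?_
      rw [Embedding.coeFn_mk, Set.Sum.elim_range, basin_union]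
      exact (hcover y).imp (mem_basin_range_iff_sameComp hα h0).2
        (mem_basin_range_iff_sameComp hβ hb).2
  · rintro ⟨e, he⟩
    have hb : e (Sum.inr 0) ∈ basin f (Set.range (e ∘ Sum.inr)) := subset_basin ⟨0, rfl⟩
    refine ⟨gopOrd_eq_of_mem_basin he.semiconj_inl (e.injective.comp Sum.inl_injective)
      he.mem_basin, e (Sum.inr 0), gopOrd_eq_of_mem_basin he.semiconj_inr
      (e.injective.comp Sum.inr_injective) hb, fun h => ?_, fun y => ?_⟩
    · exact Set.disjoint_left.1 he.disjoint_basin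
        ((mem_basin_range_iff_sameComp he.semiconj_inl he.mem_basin).2 h) hb
    · rw [← mem_basin_range_iff_sameComp he.semiconj_inl he.mem_basin,
        ← mem_basin_range_iff_sameComp he.semiconj_inr hb]
      exact he.basin_union_basin.ge (Set.mem_univ y)

end GlobalOrbitPattern

/-- for `N ≥ 2` and positive integers `p, q` with `p + q ≤ N`, the number of
`f ∈ F_N` whose global orbit pattern is `[p, q]` equals
`(N−1)! · N^{N−(p+q)} / ((N−(p+q))! · q)` (stated here in multiplied-out form, the
division being exact). -/
theorem card_gop_pair (N p q : ℕ) (hN : 2 ≤ N) (hp : 0 < p) (hq : 0 < q)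
    (hpq : p + q ≤ N) :
    Nat.card {f : Fin N → Fin N // gop f = [p, q]} * ((N - (p + q)).factorial * q)
      = (N - 1).factorial * N ^ (N - (p + q)) := by
  have : NeZero N := ⟨by omega⟩
  have : NeZero p := ⟨hp.ne'⟩
  have : NeZero q := ⟨hq.ne'⟩
  have hcount := card_mul_card_exists_isMarking (p := p) (q := q) (0 : Fin N)
  simp only [← gop_eq_pair_iff_exists_isMarking, Fintype.card_fin] at hcount
  refine Nat.eq_of_mul_eq_mul_left (Nat.mul_pos (NeZero.pos N) hp) ?_
  calc N * p * (Nat.card {f : Fin N → Fin N // gop f = [p, q]} * ((N - (p + q)).factorial * q))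
      = (N - (p + q)).factorial
          * (N * (Nat.card {f : Fin N → Fin N // gop f = [p, q]} * (p * q))) := by ring
    _ = (N - (p + q)).factorial * N.descFactorial (p + q) * (p * N ^ (N - (p + q))) := by
        rw [hcount, mul_assoc]
    _ = N * (N - 1).factorial * (p * N ^ (N - (p + q))) := by
        rw [Nat.factorial_mul_descFactorial hpq, Nat.mul_factorial_pred (NeZero.ne N)]
    _ = N * p * ((N - 1).factorial * N ^ (N - (p + q))) := by ring
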